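/- Fundamental lemma of the resource logical relation: for all γ and Γ, (1) if γ·Γ ⊢ V : A then γ·Γ ⊨_lin V : A, and (2) if γ·Γ ⊢ M : B then γ·Γ ⊨_lin M : B. -/

import Mathlib

set_option autoImplicit false

/-- A preordered semiring of grades `(Q, +, 0, ·, 1, ≤co)`,
where `≤co` is a preorder respected by `+` and `·`. -/
structure CoSig (Q : Type) where
  add : Q → Q → Q
  zero : Q
  mul : Q → Q → Q
  one : Q
  le : Q → Q → Prop
  add_assoc : ∀ a b c, add (add a b) c = add a (add b c)
  add_comm : ∀ a b, add a b = add b a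
  add_zero : ∀ a, add a zero = a
  mul_assoc : ∀ a b c, mul (mul a b) c = mul a (mul b c)
  one_mul : ∀ a, mul one a = a
  mul_one : ∀ a, mul a one = a
  zero_mul : ∀ a, mul zero a = zero
  mul_zero : ∀ a, mul a zero = zero
  left_distrib : ∀ a b c, mul a (add b c) = add (mul a b) (mul a c)
  right_distrib : ∀ a b c, mul (add a b) c = add (mul a c) (mul b c)
  le_refl : ∀ a, le a a
  le_trans : ∀ a b c, le a b → le b c → le a c
  add_le_add : ∀ a b c d, le a b → le c d → le (add a c) (add b d)
  mul_le_mul : ∀ a b c d, le a b → le c d → le (mul a c) (mul b d)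

namespace CBPVCo

/-- Pointwise comparison of grade vectors: `γ₁ ≤co γ₂`. -/
def vle {Q : Type} (S : CoSig Q) (γ₁ γ₂ : List Q) : Prop := List.Forall₂ S.le γ₁ γ₂

/-- Pointwise addition of grade vectors. -/
def vadd {Q : Type} (S : CoSig Q) (γ₁ γ₂ : List Q) : List Q := List.zipWith S.add γ₁ γ₂

/-- Pointwise scaling of a grade vector: `q·γ`. -/
def vscale {Q : Type} (S : CoSig Q) (q : Q) (γ : List Q) : List Q := γ.map (S.mul q)

/-- `γ ≤co 0̄`: every entry of the grade vector is discardable. -/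
def leZero {Q : Type} (S : CoSig Q) (γ : List Q) : Prop := ∀ q ∈ γ, S.le q S.zero

mutual
/-- CBPV value types (coeffect version): `unit`, thunks `U B`, positive products. -/
inductive VTy (Q : Type) : Type where
  | unit : VTy Q
  | thunk : CTy Q → VTy Q
  | prod : VTy Q → VTy Q → VTy Q
/-- CBPV computation types (coeffect version): graded functions `A^q → B`,
graded returners `F_q A`, negative products. -/
inductive CTy (Q : Type) : Type where
  | arr : VTy Q → Q → CTy Q → CTy Q
  | F : Q → VTy Q → CTy Q
  | wth : CTy Q → CTy Q → CTy Q
end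

mutual
/-- CBPV values (de Bruijn indices for variables). -/
inductive Val (Q : Type) : Type where
  | var : Nat → Val Q
  | unit : Val Q
  | thunk : Comp Q → Val Q
  | pair : Val Q → Val Q → Val Q
/-- CBPV computations, with grade annotations on binders and on `return`. -/
inductive Comp (Q : Type) : Type where
  | lam : Q → Comp Q → Comp Q
  | app : Comp Q → Val Q → Comp Q
  | force : Val Q → Comp Q
  | split : Q → Val Q → Comp Q → Comp Q
  | cpair : Comp Q → Comp Q → Comp Q
  | fst : Comp Q → Comp Q
  | snd : Comp Q → Comp Q
  | ret : Q → Val Q → Comp Q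
  | letin : Q → Comp Q → Comp Q → Comp Q
end

mutual
/-- The value typing judgment `γ·Γ ⊢ V : A` of the CBPV type-and-coeffect system. -/
inductive VHasTy {Q : Type} (S : CoSig Q) : List Q → List (VTy Q) → Val Q → VTy Q → Prop where
  | var : ∀ {γ : List Q} {Γ : List (VTy Q)} {x : Nat} {q : Q} {A : VTy Q},
      γ.length = Γ.length → Γ[x]? = some A → γ[x]? = some q → S.le q S.one →
      (∀ (i : Nat) (q' : Q), i ≠ x → γ[i]? = some q' → S.le q' S.zero) →
      VHasTy S γ Γ (.var x) A
  | unit : ∀ {γ : List Q} {Γ : List (VTy Q)},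
      γ.length = Γ.length → leZero S γ → VHasTy S γ Γ .unit .unit
  | thunk : ∀ {γ : List Q} {Γ : List (VTy Q)} {M : Comp Q} {B : CTy Q},
      CHasTy S γ Γ M B → VHasTy S γ Γ (.thunk M) (.thunk B)
  | pair : ∀ {γ γ₁ γ₂ : List Q} {Γ : List (VTy Q)} {V₁ V₂ : Val Q} {A₁ A₂ : VTy Q},
      VHasTy S γ₁ Γ V₁ A₁ → VHasTy S γ₂ Γ V₂ A₂ → vle S γ (vadd S γ₁ γ₂) →
      VHasTy S γ Γ (.pair V₁ V₂) (.prod A₁ A₂)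

/-- The computation typing judgment `γ·Γ ⊢ M : B` of the CBPV type-and-coeffect system. -/
inductive CHasTy {Q : Type} (S : CoSig Q) : List Q → List (VTy Q) → Comp Q → CTy Q → Prop where
  | lam : ∀ {γ : List Q} {Γ : List (VTy Q)} {q : Q} {A : VTy Q} {M : Comp Q} {B : CTy Q},
      CHasTy S (q :: γ) (A :: Γ) M B → CHasTy S γ Γ (.lam q M) (.arr A q B)
  | app : ∀ {γ γ₁ γ₂ : List Q} {Γ : List (VTy Q)} {M : Comp Q} {V : Val Q}
      {A : VTy Q} {q : Q} {B : CTy Q},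
      CHasTy S γ₁ Γ M (.arr A q B) → VHasTy S γ₂ Γ V A →
      vle S γ (vadd S γ₁ (vscale S q γ₂)) → CHasTy S γ Γ (.app M V) B
  | force : ∀ {γ : List Q} {Γ : List (VTy Q)} {V : Val Q} {B : CTy Q},
      VHasTy S γ Γ V (.thunk B) → CHasTy S γ Γ (.force V) B
  | ret : ∀ {γ γ₁ : List Q} {Γ : List (VTy Q)} {q : Q} {V : Val Q} {A : VTy Q},
      VHasTy S γ₁ Γ V A → vle S γ (vscale S q γ₁) → CHasTy S γ Γ (.ret q V) (.F q A)
  | letin : ∀ {γ γ₁ γ₂ : List Q} {Γ : List (VTy Q)} {q₁ q₂ : Q} {M N : Comp Q}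
      {A : VTy Q} {B : CTy Q},
      CHasTy S γ₁ Γ M (.F q₁ A) → CHasTy S (S.mul q₁ q₂ :: γ₂) (A :: Γ) N B →
      vle S γ (vadd S (vscale S q₂ γ₁) γ₂) → CHasTy S γ Γ (.letin q₂ M N) B
  | split : ∀ {γ γ₁ γ₂ : List Q} {Γ : List (VTy Q)} {q : Q} {V : Val Q}
      {A₁ A₂ : VTy Q} {N : Comp Q} {B : CTy Q},
      VHasTy S γ₁ Γ V (.prod A₁ A₂) → CHasTy S (q :: q :: γ₂) (A₂ :: A₁ :: Γ) N B →
      vle S γ (vadd S (vscale S q γ₁) γ₂) → CHasTy S γ Γ (.split q V N) B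
  | cpair : ∀ {γ : List Q} {Γ : List (VTy Q)} {M₁ M₂ : Comp Q} {B₁ B₂ : CTy Q},
      CHasTy S γ Γ M₁ B₁ → CHasTy S γ Γ M₂ B₂ → CHasTy S γ Γ (.cpair M₁ M₂) (.wth B₁ B₂)
  | fst : ∀ {γ : List Q} {Γ : List (VTy Q)} {M : Comp Q} {B₁ B₂ : CTy Q},
      CHasTy S γ Γ M (.wth B₁ B₂) → CHasTy S γ Γ (.fst M) B₁
  | snd : ∀ {γ : List Q} {Γ : List (VTy Q)} {M : Comp Q} {B₁ B₂ : CTy Q},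
      CHasTy S γ Γ M (.wth B₁ B₂) → CHasTy S γ Γ (.snd M) B₂
end

/-- Closed values: closures, unit, pairs, and the special untyped
discarded value `⚡` (`bolt`). -/
inductive CloVal (Q : Type) : Type where
  | clo : List Q → List (CloVal Q) → Comp Q → CloVal Q
  | unit : CloVal Q
  | pair : CloVal Q → CloVal Q → CloVal Q
  | bolt : CloVal Q

/-- Closed terminal computations. -/
inductive Terminal (Q : Type) : Type where
  | ret : Q → CloVal Q → Terminal Q
  | lamClo : List Q → List (CloVal Q) → Q → Comp Q → Terminal Q
  | cpairClo : List Q → List (CloVal Q) → Comp Q → Comp Q → Terminal Q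

/-- The resource-tracking value judgment `γ·ρ ⊢_lin V ⇓ W`. -/
inductive EvalVal {Q : Type} (S : CoSig Q) :
    List Q → List (CloVal Q) → Val Q → CloVal Q → Prop where
  | var : ∀ {γ : List Q} {ρ : List (CloVal Q)} {x : Nat} {q : Q} {W : CloVal Q},
      γ.length = ρ.length → ρ[x]? = some W → γ[x]? = some q → S.le q S.one →
      (∀ (i : Nat) (q' : Q), i ≠ x → γ[i]? = some q' → S.le q' S.zero) →
      EvalVal S γ ρ (.var x) W
  | unit : ∀ {γ : List Q} {ρ : List (CloVal Q)},
      γ.length = ρ.length → leZero S γ → EvalVal S γ ρ .unit .unit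
  | thunk : ∀ {γ γ' : List Q} {ρ : List (CloVal Q)} {M : Comp Q},
      vle S γ γ' → EvalVal S γ ρ (.thunk M) (.clo γ' ρ M)
  | pair : ∀ {γ γ₁ γ₂ : List Q} {ρ : List (CloVal Q)} {V₁ V₂ : Val Q} {W₁ W₂ : CloVal Q},
      EvalVal S γ₁ ρ V₁ W₁ → EvalVal S γ₂ ρ V₂ W₂ → vle S γ (vadd S γ₁ γ₂) →
      EvalVal S γ ρ (.pair V₁ V₂) (.pair W₁ W₂)

/-- The resource-tracking big-step judgment `γ·ρ ⊢_lin M ⇓ T`: elimination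
rules at grade `0` discard the eliminated value, binding `⚡` in its place. -/
inductive EvalComp {Q : Type} (S : CoSig Q) :
    List Q → List (CloVal Q) → Comp Q → Terminal Q → Prop where
  | lam : ∀ {γ γ' : List Q} {ρ : List (CloVal Q)} {q : Q} {M : Comp Q},
      vle S γ γ' → EvalComp S γ ρ (.lam q M) (.lamClo γ' ρ q M)
  | cpair : ∀ {γ γ' : List Q} {ρ : List (CloVal Q)} {M₁ M₂ : Comp Q},
      vle S γ γ' → EvalComp S γ ρ (.cpair M₁ M₂) (.cpairClo γ' ρ M₁ M₂)
  | ret : ∀ {γ γ₁ : List Q} {ρ : List (CloVal Q)} {q : Q} {V : Val Q} {W : CloVal Q},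
      q ≠ S.zero → EvalVal S γ₁ ρ V W → vle S γ (vscale S q γ₁) →
      EvalComp S γ ρ (.ret q V) (.ret q W)
  | retZero : ∀ {γ : List Q} {ρ : List (CloVal Q)} {V : Val Q},
      leZero S γ → EvalComp S γ ρ (.ret S.zero V) (.ret S.zero .bolt)
  | app : ∀ {γ γ₁ γ₂ γ' : List Q} {ρ ρ' : List (CloVal Q)} {M M' : Comp Q}
      {V : Val Q} {W : CloVal Q} {q : Q} {T : Terminal Q},
      q ≠ S.zero → EvalComp S γ₁ ρ M (.lamClo γ' ρ' q M') → EvalVal S γ₂ ρ V W →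
      EvalComp S (q :: γ') (W :: ρ') M' T → vle S γ (vadd S γ₁ (vscale S q γ₂)) →
      EvalComp S γ ρ (.app M V) T
  | appZero : ∀ {γ γ₁ γ' : List Q} {ρ ρ' : List (CloVal Q)} {M M' : Comp Q}
      {V : Val Q} {T : Terminal Q},
      EvalComp S γ₁ ρ M (.lamClo γ' ρ' S.zero M') →
      EvalComp S (S.zero :: γ') (.bolt :: ρ') M' T → vle S γ γ₁ →
      EvalComp S γ ρ (.app M V) T
  | force : ∀ {γ γ' : List Q} {ρ ρ' : List (CloVal Q)} {V : Val Q} {M : Comp Q} {T : Terminal Q},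
      EvalVal S γ ρ V (.clo γ' ρ' M) → EvalComp S γ' ρ' M T → EvalComp S γ ρ (.force V) T
  | letin : ∀ {γ γ₁ γ₂ : List Q} {ρ : List (CloVal Q)} {q₁ q₂ : Q} {M N : Comp Q}
      {W : CloVal Q} {T : Terminal Q},
      q₂ ≠ S.zero → EvalComp S γ₁ ρ M (.ret q₁ W) →
      EvalComp S (S.mul q₁ q₂ :: γ₂) (W :: ρ) N T →
      vle S γ (vadd S (vscale S q₂ γ₁) γ₂) → EvalComp S γ ρ (.letin q₂ M N) T
  | letinZero : ∀ {γ γ₂ : List Q} {ρ : List (CloVal Q)} {M N : Comp Q} {T : Terminal Q},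
      EvalComp S (S.zero :: γ₂) (.bolt :: ρ) N T → vle S γ γ₂ →
      EvalComp S γ ρ (.letin S.zero M N) T
  | split : ∀ {γ γ₁ γ₂ : List Q} {ρ : List (CloVal Q)} {q : Q} {V : Val Q}
      {W₁ W₂ : CloVal Q} {N : Comp Q} {T : Terminal Q},
      q ≠ S.zero → EvalVal S γ₁ ρ V (.pair W₁ W₂) →
      EvalComp S (q :: q :: γ₂) (W₂ :: W₁ :: ρ) N T →
      vle S γ (vadd S (vscale S q γ₁) γ₂) → EvalComp S γ ρ (.split q V N) T
  | splitZero : ∀ {γ γ₂ : List Q} {ρ : List (CloVal Q)} {V : Val Q} {N : Comp Q} {T : Terminal Q},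
      EvalComp S (S.zero :: S.zero :: γ₂) (.bolt :: .bolt :: ρ) N T → vle S γ γ₂ →
      EvalComp S γ ρ (.split S.zero V N) T
  | fst : ∀ {γ γ' : List Q} {ρ ρ' : List (CloVal Q)} {M M₁ M₂ : Comp Q} {T : Terminal Q},
      EvalComp S γ ρ M (.cpairClo γ' ρ' M₁ M₂) → EvalComp S γ' ρ' M₁ T →
      EvalComp S γ ρ (.fst M) T
  | snd : ∀ {γ γ' : List Q} {ρ ρ' : List (CloVal Q)} {M M₁ M₂ : Comp Q} {T : Terminal Q},
      EvalComp S γ ρ M (.cpairClo γ' ρ' M₁ M₂) → EvalComp S γ' ρ' M₂ T →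
      EvalComp S γ ρ (.snd M) T

mutual
/-- The resource logical relation on closed values: `W ∈ 𝒲⟦A⟧`. -/
def WRel {Q : Type} (S : CoSig Q) : VTy Q → CloVal Q → Prop
  | .unit, W => W = CloVal.unit
  | .thunk B, W => ∃ (γ : List Q) (ρ : List (CloVal Q)) (M : Comp Q),
      W = CloVal.clo γ ρ M ∧ ∃ (T : Terminal Q), EvalComp S γ ρ M T ∧ TRel S B T
  | .prod A₁ A₂, W => ∃ (W₁ W₂ : CloVal Q), W = CloVal.pair W₁ W₂ ∧
      WRel S A₁ W₁ ∧ WRel S A₂ W₂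

/-- The resource logical relation on closed terminals, where a value graded by
`0` is the discarded value `⚡`: `T ∈ 𝒯⟦B⟧`. -/
def TRel {Q : Type} (S : CoSig Q) : CTy Q → Terminal Q → Prop
  | .F q A, T => ∃ (W : CloVal Q), T = Terminal.ret q W ∧
      ((q = S.zero ∧ W = CloVal.bolt) ∨ (q ≠ S.zero ∧ WRel S A W))
  | .arr A q B, T => ∃ (γ : List Q) (ρ : List (CloVal Q)) (M : Comp Q),
      T = Terminal.lamClo γ ρ q M ∧
      ∀ (W : CloVal Q), ((q = S.zero ∧ W = CloVal.bolt) ∨ (q ≠ S.zero ∧ WRel S A W)) →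
        ∃ (T' : Terminal Q), EvalComp S (q :: γ) (W :: ρ) M T' ∧ TRel S B T'
  | .wth B₁ B₂, T => ∃ (γ : List Q) (ρ : List (CloVal Q)) (M₁ M₂ : Comp Q),
      T = Terminal.cpairClo γ ρ M₁ M₂ ∧
      (∃ (T' : Terminal Q), EvalComp S γ ρ M₁ T' ∧ TRel S B₁ T') ∧
      (∃ (T' : Terminal Q), EvalComp S γ ρ M₂ T' ∧ TRel S B₂ T')
end

/-- The graded relation on closed values: `𝒲_0⟦A⟧ = {⚡}` and
`𝒲_q⟦A⟧ = 𝒲⟦A⟧` for `q ≠ 0`. -/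
def WRelG {Q : Type} (S : CoSig Q) (q : Q) (A : VTy Q) (W : CloVal Q) : Prop :=
  (q = S.zero ∧ W = CloVal.bolt) ∨ (q ≠ S.zero ∧ WRel S A W)

/-- The resource logical relation on computations with graded environments. -/
def MRel {Q : Type} (S : CoSig Q) (B : CTy Q) (γ : List Q) (ρ : List (CloVal Q))
    (M : Comp Q) : Prop :=
  ∃ (T : Terminal Q), EvalComp S γ ρ M T ∧ TRel S B T

/-- The resource logical relation on values with graded environments. -/
def VRel {Q : Type} (S : CoSig Q) (A : VTy Q) (γ : List Q) (ρ : List (CloVal Q))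
    (V : Val Q) : Prop :=
  ∃ (W : CloVal Q), EvalVal S γ ρ V W ∧ WRel S A W

/-- Semantic typing of environments: `γ·Γ ⊨ ρ` — the environment maps every
variable carrying a nonzero grade in `γ·Γ` to a closed value of the expected type. -/
def EnvOk {Q : Type} (S : CoSig Q) (γ : List Q) (Γ : List (VTy Q))
    (ρ : List (CloVal Q)) : Prop :=
  γ.length = Γ.length ∧ ρ.length = Γ.length ∧
  ∀ (x : Nat) (q : Q) (A : VTy Q), γ[x]? = some q → Γ[x]? = some A → q ≠ S.zero →
    ∃ (W : CloVal Q), ρ[x]? = some W ∧ WRel S A W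

/-- Resource semantic typing of values: `γ·Γ ⊨_lin V : A`. -/
def VSem {Q : Type} (S : CoSig Q) (γ : List Q) (Γ : List (VTy Q)) (V : Val Q)
    (A : VTy Q) : Prop :=
  ∀ (ρ : List (CloVal Q)), EnvOk S γ Γ ρ → VRel S A γ ρ V

/-- Resource semantic typing of computations: `γ·Γ ⊨_lin M : B`. -/
def CSem {Q : Type} (S : CoSig Q) (γ : List Q) (Γ : List (VTy Q)) (M : Comp Q)
    (B : CTy Q) : Prop :=
  ∀ (ρ : List (CloVal Q)), EnvOk S γ Γ ρ → MRel S B γ ρ M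

/-!
Each typing rule is matched by a semantic rule for `⊨_lin`. An environment well typed at `γ` must be
split among the premises, and such a transfer from `γ` to `δ` is possible as soon as `δ` vanishes
wherever `γ` does. The three conditions on the grades give exactly this for `γ ≤co γ₁ + γ₂` and,
when `q ≠ 0`, for `γ ≤co q·γ₁`; they also exclude `0 ≤co 1`, so that the variable rule never looks
up a discarded value. When `q = 0` the scaled premise need not be evaluated: its contribution to `γ`
is zero and the value it would produce is replaced by `⚡`.
-/

theorem _root_.CoSig.eq_zero_of_zero_le {Q : Type} (S : CoSig Q)
    (hzero_add : ∀ q₁ q₂ : Q, S.le S.zero (S.add q₁ q₂) → q₁ = S.zero ∧ q₂ = S.zero)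
    {q : Q} (hq : S.le S.zero q) : q = S.zero :=
  (hzero_add q S.zero (by rwa [S.add_zero])).1

theorem _root_.CoSig.eq_zero_of_add_eq_zero {Q : Type} (S : CoSig Q)
    (hzero_add : ∀ q₁ q₂ : Q, S.le S.zero (S.add q₁ q₂) → q₁ = S.zero ∧ q₂ = S.zero)
    {q₁ q₂ : Q} (h : S.add q₁ q₂ = S.zero) : q₁ = S.zero ∧ q₂ = S.zero :=
  hzero_add q₁ q₂ (h ▸ S.le_refl _)

section

variable {Q : Type} {S : CoSig Q} {q q₁ q₂ : Q} {γ γ₁ γ₂ δ : List Q} {Γ : List (VTy Q)}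
  {ρ : List (CloVal Q)} {V V₁ V₂ : Val Q} {M M₁ M₂ N : Comp Q} {A A₁ A₂ : VTy Q} {B B₁ B₂ : CTy Q}
  {W : CloVal Q} {T : Terminal Q}

theorem vle_refl (S : CoSig Q) (γ : List Q) : vle S γ γ :=
  List.forall₂_same.2 fun q _ ↦ S.le_refl q

theorem length_vadd (S : CoSig Q) (γ₁ γ₂ : List Q) :
    (vadd S γ₁ γ₂).length = min γ₁.length γ₂.length :=
  List.length_zipWith

theorem length_vscale (S : CoSig Q) (q : Q) (γ : List Q) : (vscale S q γ).length = γ.length :=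
  List.length_map _

theorem vadd_comm (S : CoSig Q) (γ₁ γ₂ : List Q) : vadd S γ₁ γ₂ = vadd S γ₂ γ₁ :=
  List.zipWith_comm_of_comm S.add_comm

theorem vadd_vscale_zero (S : CoSig Q) (h : γ₁.length ≤ γ₂.length) :
    vadd S γ₁ (vscale S S.zero γ₂) = γ₁ := by
  refine List.ext_getElem ?_ fun i _ _ ↦ ?_
  · rw [length_vadd, length_vscale, min_eq_left h]
  · simp only [vadd, vscale, List.getElem_zipWith, List.getElem_map, S.zero_mul, S.add_zero]

theorem vscale_zero_vadd (S : CoSig Q) (h : γ₂.length ≤ γ₁.length) :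
    vadd S (vscale S S.zero γ₁) γ₂ = γ₂ := by
  rw [vadd_comm, vadd_vscale_zero S h]

theorem leZero_of_vle_vscale_zero (h : vle S γ (vscale S S.zero δ)) : leZero S γ := by
  intro q hq
  obtain ⟨i, hi, rfl⟩ := List.getElem_of_mem hq
  simpa only [vscale, List.get_eq_getElem, List.getElem_map, S.zero_mul] using
    List.Forall₂.get h hi (h.length_eq ▸ hi)

mutual

theorem VHasTy.length_eq {γ : List Q} {Γ : List (VTy Q)} {V : Val Q} {A : VTy Q} :
    VHasTy S γ Γ V A → γ.length = Γ.length
  | .var hlen _ _ _ _ => hlen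
  | .unit hlen _ => hlen
  | .thunk hM => hM.length_eq
  | .pair h₁ h₂ hle => by
    rw [List.Forall₂.length_eq hle, length_vadd, h₁.length_eq, h₂.length_eq, min_self]

theorem CHasTy.length_eq {γ : List Q} {Γ : List (VTy Q)} {M : Comp Q} {B : CTy Q} :
    CHasTy S γ Γ M B → γ.length = Γ.length
  | .lam hM => Nat.succ.inj hM.length_eq
  | .app hM hV hle => by
    rw [List.Forall₂.length_eq hle, length_vadd, length_vscale, hM.length_eq, hV.length_eq,
      min_self]
  | .force hV => hV.length_eq
  | .ret hV hle => by rw [List.Forall₂.length_eq hle, length_vscale, hV.length_eq]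
  | .letin hM hN hle => by
    rw [List.Forall₂.length_eq hle, length_vadd, length_vscale, hM.length_eq,
      Nat.succ.inj hN.length_eq, min_self]
  | .split hV hN hle => by
    rw [List.Forall₂.length_eq hle, length_vadd, length_vscale, hV.length_eq,
      Nat.succ.inj (Nat.succ.inj hN.length_eq), min_self]
  | .cpair h₁ _ => h₁.length_eq
  | .fst hM => hM.length_eq
  | .snd hM => hM.length_eq

end

theorem wRel_unit_iff : WRel S .unit W ↔ W = .unit := by
  rw [WRel]

theorem wRel_thunk_iff :
    WRel S (.thunk B) W ↔ ∃ γ ρ M, W = .clo γ ρ M ∧ MRel S B γ ρ M := by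
  rw [WRel]; rfl

theorem wRel_prod_iff :
    WRel S (.prod A₁ A₂) W ↔ ∃ W₁ W₂, W = .pair W₁ W₂ ∧ WRel S A₁ W₁ ∧ WRel S A₂ W₂ := by
  rw [WRel]

theorem tRel_F_iff : TRel S (.F q A) T ↔ ∃ W, T = .ret q W ∧ WRelG S q A W := by
  rw [TRel]; rfl

theorem tRel_arr_iff :
    TRel S (.arr A q B) T ↔
      ∃ γ ρ M, T = .lamClo γ ρ q M ∧ ∀ W, WRelG S q A W → MRel S B (q :: γ) (W :: ρ) M := by
  rw [TRel]; rfl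

theorem tRel_wth_iff :
    TRel S (.wth B₁ B₂) T ↔
      ∃ γ ρ M₁ M₂, T = .cpairClo γ ρ M₁ M₂ ∧ MRel S B₁ γ ρ M₁ ∧ MRel S B₂ γ ρ M₂ := by
  rw [TRel]; rfl

theorem wRelG_zero_bolt (S : CoSig Q) (A : VTy Q) : WRelG S S.zero A .bolt :=
  .inl ⟨rfl, rfl⟩

theorem WRel.wRelG (hW : WRel S A W) (hq : q ≠ S.zero) : WRelG S q A W :=
  .inr ⟨hq, hW⟩

theorem WRelG.wRel (hW : WRelG S q A W) (hq : q ≠ S.zero) : WRel S A W :=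
  (hW.resolve_left fun h ↦ hq h.1).2

theorem EnvOk.cons (hρ : EnvOk S γ Γ ρ) (hW : q ≠ S.zero → WRel S A W) :
    EnvOk S (q :: γ) (A :: Γ) (W :: ρ) := by
  obtain ⟨hγ, hρΓ, hlookup⟩ := hρ
  refine ⟨congrArg Nat.succ hγ, congrArg Nat.succ hρΓ, fun x q' A' hq' hA' hne ↦ ?_⟩
  cases x with
  | zero =>
    cases hq'
    cases hA'
    exact ⟨W, rfl, hW hne⟩
  | succ x => exact hlookup x q' A' hq' hA' hne

theorem EnvOk.cons_zero (hρ : EnvOk S γ Γ ρ) (A : VTy Q) (W : CloVal Q) :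
    EnvOk S (S.zero :: γ) (A :: Γ) (W :: ρ) :=
  hρ.cons fun hne ↦ absurd rfl hne

theorem EnvOk.of_forall₂_zero_imp_zero (hρ : EnvOk S γ Γ ρ)
    (h : List.Forall₂ (fun q q' ↦ q = S.zero → q' = S.zero) γ δ) : EnvOk S δ Γ ρ := by
  obtain ⟨hγ, hρΓ, hlookup⟩ := hρ
  refine ⟨h.length_eq ▸ hγ, hρΓ, fun x q A hq hA hne ↦ ?_⟩
  obtain ⟨hx, rfl⟩ := List.getElem?_eq_some_iff.1 hq
  have hxγ : x < γ.length := h.length_eq ▸ hx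
  exact hlookup x γ[x] A (List.getElem?_eq_getElem hxγ) hA fun h0 ↦ hne (h.get hxγ hx h0)

theorem EnvOk.of_vle (hzero_le : ∀ q : Q, S.le S.zero q → q = S.zero) (hρ : EnvOk S γ Γ ρ)
    (hle : vle S γ δ) : EnvOk S δ Γ ρ :=
  hρ.of_forall₂_zero_imp_zero <| hle.imp fun q q' hqq' (h0 : q = S.zero) ↦ hzero_le q' (h0 ▸ hqq')

theorem EnvOk.of_vscale
    (hzero_div : ∀ q₁ q₂ : Q, S.mul q₁ q₂ = S.zero → q₁ = S.zero ∨ q₂ = S.zero)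
    (hq : q ≠ S.zero) (hρ : EnvOk S (vscale S q γ) Γ ρ) : EnvOk S γ Γ ρ :=
  hρ.of_forall₂_zero_imp_zero <| List.forall₂_map_left_iff.2 <| List.forall₂_same.2 fun q' _ h0 ↦
    (hzero_div q q' h0).resolve_left hq

theorem EnvOk.of_vadd_left (hadd : ∀ q₁ q₂ : Q, S.add q₁ q₂ = S.zero → q₁ = S.zero)
    (hlen : γ₁.length ≤ γ₂.length) (hρ : EnvOk S (vadd S γ₁ γ₂) Γ ρ) : EnvOk S γ₁ Γ ρ := by
  refine hρ.of_forall₂_zero_imp_zero <| List.forall₂_iff_get.2 ⟨?_, fun i _ _ h0 ↦ ?_⟩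
  · rw [length_vadd, min_eq_left hlen]
  · simp only [vadd, List.get_eq_getElem, List.getElem_zipWith] at h0
    exact hadd _ _ h0

theorem EnvOk.of_vle_vadd
    (hzero_add : ∀ q₁ q₂ : Q, S.le S.zero (S.add q₁ q₂) → q₁ = S.zero ∧ q₂ = S.zero)
    (hlen : γ₁.length = γ₂.length) (hρ : EnvOk S γ Γ ρ) (hle : vle S γ (vadd S γ₁ γ₂)) :
    EnvOk S γ₁ Γ ρ ∧ EnvOk S γ₂ Γ ρ := by
  have hadd : ∀ q₁ q₂ : Q, S.add q₁ q₂ = S.zero → q₁ = S.zero :=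
    fun _ _ h ↦ (S.eq_zero_of_add_eq_zero hzero_add h).1
  have hsum : EnvOk S (vadd S γ₁ γ₂) Γ ρ :=
    hρ.of_vle (fun _ ↦ S.eq_zero_of_zero_le hzero_add) hle
  exact ⟨hsum.of_vadd_left hadd hlen.le, (vadd_comm S γ₁ γ₂ ▸ hsum).of_vadd_left hadd hlen.ge⟩

theorem VSem.var {x : ℕ} (hone : ¬ S.le S.zero S.one) (hA : Γ[x]? = some A) (hq : γ[x]? = some q)
    (hle : S.le q S.one)
    (hothers : ∀ (i : ℕ) (q' : Q), i ≠ x → γ[i]? = some q' → S.le q' S.zero) :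
    VSem S γ Γ (.var x) A := by
  rintro ρ ⟨hγ, hρ, hlookup⟩
  have hne : q ≠ S.zero := fun h0 ↦ hone (h0 ▸ hle)
  obtain ⟨W, hx, hW⟩ := hlookup x q A hq hA hne
  exact ⟨W, .var (hγ.trans hρ.symm) hx hq hle hothers, hW⟩

theorem VSem.unit (hγ : leZero S γ) : VSem S γ Γ .unit .unit :=
  fun _ hρ ↦ ⟨.unit, .unit (hρ.1.trans hρ.2.1.symm) hγ, wRel_unit_iff.2 rfl⟩

theorem VSem.thunk (hM : CSem S γ Γ M B) : VSem S γ Γ (.thunk M) (.thunk B) :=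
  fun ρ hρ ↦ ⟨.clo γ ρ M, .thunk (vle_refl S γ), wRel_thunk_iff.2 ⟨γ, ρ, M, rfl, hM ρ hρ⟩⟩

theorem VSem.pair
    (hzero_add : ∀ q₁ q₂ : Q, S.le S.zero (S.add q₁ q₂) → q₁ = S.zero ∧ q₂ = S.zero)
    (hlen : γ₁.length = γ₂.length) (h₁ : VSem S γ₁ Γ V₁ A₁) (h₂ : VSem S γ₂ Γ V₂ A₂)
    (hle : vle S γ (vadd S γ₁ γ₂)) : VSem S γ Γ (.pair V₁ V₂) (.prod A₁ A₂) := by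
  intro ρ hρ
  obtain ⟨hρ₁, hρ₂⟩ := hρ.of_vle_vadd hzero_add hlen hle
  obtain ⟨W₁, hV₁, hW₁⟩ := h₁ ρ hρ₁
  obtain ⟨W₂, hV₂, hW₂⟩ := h₂ ρ hρ₂
  exact ⟨.pair W₁ W₂, .pair hV₁ hV₂ hle, wRel_prod_iff.2 ⟨W₁, W₂, rfl, hW₁, hW₂⟩⟩

theorem CSem.lam (hM : CSem S (q :: γ) (A :: Γ) M B) : CSem S γ Γ (.lam q M) (.arr A q B) :=
  fun ρ hρ ↦ ⟨.lamClo γ ρ q M, .lam (vle_refl S γ),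
    tRel_arr_iff.2 ⟨γ, ρ, M, rfl, fun W hW ↦ hM (W :: ρ) (hρ.cons hW.wRel)⟩⟩

theorem CSem.app
    (hzero_add : ∀ q₁ q₂ : Q, S.le S.zero (S.add q₁ q₂) → q₁ = S.zero ∧ q₂ = S.zero)
    (hzero_div : ∀ q₁ q₂ : Q, S.mul q₁ q₂ = S.zero → q₁ = S.zero ∨ q₂ = S.zero)
    (hlen : γ₁.length = γ₂.length) (hM : CSem S γ₁ Γ M (.arr A q B)) (hV : VSem S γ₂ Γ V A)
    (hle : vle S γ (vadd S γ₁ (vscale S q γ₂))) : CSem S γ Γ (.app M V) B := by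
  intro ρ hρ
  obtain ⟨hρ₁, hρ₂⟩ :=
    hρ.of_vle_vadd hzero_add (hlen.trans (length_vscale S q γ₂).symm) hle
  obtain ⟨_, hMT, hT⟩ := hM ρ hρ₁
  obtain ⟨γ', ρ', M', rfl, hbody⟩ := tRel_arr_iff.1 hT
  by_cases hq : q = S.zero
  · subst hq
    obtain ⟨T, hM'T, hT⟩ := hbody .bolt (wRelG_zero_bolt S A)
    rw [vadd_vscale_zero S hlen.le] at hle
    exact ⟨T, .appZero hMT hM'T hle, hT⟩
  · obtain ⟨W, hVW, hW⟩ := hV ρ (hρ₂.of_vscale hzero_div hq)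
    obtain ⟨T, hM'T, hT⟩ := hbody W (hW.wRelG hq)
    exact ⟨T, .app hq hMT hVW hM'T hle, hT⟩

theorem CSem.force (hV : VSem S γ Γ V (.thunk B)) : CSem S γ Γ (.force V) B := by
  intro ρ hρ
  obtain ⟨_, hVW, hW⟩ := hV ρ hρ
  obtain ⟨γ', ρ', M, rfl, T, hMT, hT⟩ := wRel_thunk_iff.1 hW
  exact ⟨T, .force hVW hMT, hT⟩

theorem CSem.ret (hzero_le : ∀ q : Q, S.le S.zero q → q = S.zero)
    (hzero_div : ∀ q₁ q₂ : Q, S.mul q₁ q₂ = S.zero → q₁ = S.zero ∨ q₂ = S.zero)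
    (hV : VSem S γ₁ Γ V A) (hle : vle S γ (vscale S q γ₁)) : CSem S γ Γ (.ret q V) (.F q A) := by
  intro ρ hρ
  by_cases hq : q = S.zero
  · subst hq
    exact ⟨_, .retZero (leZero_of_vle_vscale_zero hle),
      tRel_F_iff.2 ⟨.bolt, rfl, wRelG_zero_bolt S A⟩⟩
  · obtain ⟨W, hVW, hW⟩ := hV ρ ((hρ.of_vle hzero_le hle).of_vscale hzero_div hq)
    exact ⟨.ret q W, .ret hq hVW hle, tRel_F_iff.2 ⟨W, rfl, hW.wRelG hq⟩⟩

theorem CSem.letin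
    (hzero_add : ∀ q₁ q₂ : Q, S.le S.zero (S.add q₁ q₂) → q₁ = S.zero ∧ q₂ = S.zero)
    (hzero_div : ∀ q₁ q₂ : Q, S.mul q₁ q₂ = S.zero → q₁ = S.zero ∨ q₂ = S.zero)
    (hlen : γ₁.length = γ₂.length) (hM : CSem S γ₁ Γ M (.F q₁ A))
    (hN : CSem S (S.mul q₁ q₂ :: γ₂) (A :: Γ) N B)
    (hle : vle S γ (vadd S (vscale S q₂ γ₁) γ₂)) : CSem S γ Γ (.letin q₂ M N) B := by
  intro ρ hρ
  obtain ⟨hρ₁, hρ₂⟩ := hρ.of_vle_vadd hzero_add ((length_vscale S q₂ γ₁).trans hlen) hle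
  by_cases hq₂ : q₂ = S.zero
  · subst hq₂
    rw [S.mul_zero] at hN
    rw [vscale_zero_vadd S hlen.ge] at hle
    obtain ⟨T, hNT, hT⟩ := hN (.bolt :: ρ) (hρ₂.cons_zero A .bolt)
    exact ⟨T, .letinZero hNT hle, hT⟩
  · obtain ⟨_, hMW, hret⟩ := hM ρ (hρ₁.of_vscale hzero_div hq₂)
    obtain ⟨W, rfl, hW⟩ := tRel_F_iff.1 hret
    have hWρ : EnvOk S (S.mul q₁ q₂ :: γ₂) (A :: Γ) (W :: ρ) :=
      hρ₂.cons fun hne ↦ hW.wRel fun hq₁ ↦ hne (by rw [hq₁, S.zero_mul])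
    obtain ⟨T, hNT, hT⟩ := hN (W :: ρ) hWρ
    exact ⟨T, .letin hq₂ hMW hNT hle, hT⟩

theorem CSem.split
    (hzero_add : ∀ q₁ q₂ : Q, S.le S.zero (S.add q₁ q₂) → q₁ = S.zero ∧ q₂ = S.zero)
    (hzero_div : ∀ q₁ q₂ : Q, S.mul q₁ q₂ = S.zero → q₁ = S.zero ∨ q₂ = S.zero)
    (hlen : γ₁.length = γ₂.length) (hV : VSem S γ₁ Γ V (.prod A₁ A₂))
    (hN : CSem S (q :: q :: γ₂) (A₂ :: A₁ :: Γ) N B)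
    (hle : vle S γ (vadd S (vscale S q γ₁) γ₂)) : CSem S γ Γ (.split q V N) B := by
  intro ρ hρ
  obtain ⟨hρ₁, hρ₂⟩ := hρ.of_vle_vadd hzero_add ((length_vscale S q γ₁).trans hlen) hle
  by_cases hq : q = S.zero
  · subst hq
    rw [vscale_zero_vadd S hlen.ge] at hle
    obtain ⟨T, hNT, hT⟩ := hN _ ((hρ₂.cons_zero A₁ .bolt).cons_zero A₂ .bolt)
    exact ⟨T, .splitZero hNT hle, hT⟩
  · obtain ⟨_, hVW, hW⟩ := hV ρ (hρ₁.of_vscale hzero_div hq)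
    obtain ⟨W₁, W₂, rfl, hW₁, hW₂⟩ := wRel_prod_iff.1 hW
    obtain ⟨T, hNT, hT⟩ := hN _ ((hρ₂.cons fun _ ↦ hW₁).cons fun _ ↦ hW₂)
    exact ⟨T, .split hq hVW hNT hle, hT⟩

theorem CSem.cpair (h₁ : CSem S γ Γ M₁ B₁) (h₂ : CSem S γ Γ M₂ B₂) :
    CSem S γ Γ (.cpair M₁ M₂) (.wth B₁ B₂) :=
  fun ρ hρ ↦ ⟨.cpairClo γ ρ M₁ M₂, .cpair (vle_refl S γ),
    tRel_wth_iff.2 ⟨γ, ρ, M₁, M₂, rfl, h₁ ρ hρ, h₂ ρ hρ⟩⟩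

theorem CSem.fst (hM : CSem S γ Γ M (.wth B₁ B₂)) : CSem S γ Γ (.fst M) B₁ := by
  intro ρ hρ
  obtain ⟨_, hMT, hpair⟩ := hM ρ hρ
  obtain ⟨γ', ρ', M₁, M₂, rfl, ⟨T, hM₁T, hT⟩, -⟩ := tRel_wth_iff.1 hpair
  exact ⟨T, .fst hMT hM₁T, hT⟩

theorem CSem.snd (hM : CSem S γ Γ M (.wth B₁ B₂)) : CSem S γ Γ (.snd M) B₂ := by
  intro ρ hρ
  obtain ⟨_, hMT, hpair⟩ := hM ρ hρ
  obtain ⟨γ', ρ', M₁, M₂, rfl, -, T, hM₂T, hT⟩ := tRel_wth_iff.1 hpair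
  exact ⟨T, .snd hMT hM₂T, hT⟩

mutual

theorem VHasTy.vSem (hnontriv : S.one ≠ S.zero)
    (hzero_add : ∀ q₁ q₂ : Q, S.le S.zero (S.add q₁ q₂) → q₁ = S.zero ∧ q₂ = S.zero)
    (hzero_div : ∀ q₁ q₂ : Q, S.mul q₁ q₂ = S.zero → q₁ = S.zero ∨ q₂ = S.zero)
    {γ : List Q} {Γ : List (VTy Q)} {V : Val Q} {A : VTy Q} :
    VHasTy S γ Γ V A → VSem S γ Γ V A
  | .var _ hA hq hle hothers =>
    .var (fun hone ↦ hnontriv (S.eq_zero_of_zero_le hzero_add hone)) hA hq hle hothers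
  | .unit _ hγ => .unit hγ
  | .thunk hM => .thunk (hM.cSem hnontriv hzero_add hzero_div)
  | .pair h₁ h₂ hle =>
    .pair hzero_add (h₁.length_eq.trans h₂.length_eq.symm)
      (h₁.vSem hnontriv hzero_add hzero_div) (h₂.vSem hnontriv hzero_add hzero_div) hle

theorem CHasTy.cSem (hnontriv : S.one ≠ S.zero)
    (hzero_add : ∀ q₁ q₂ : Q, S.le S.zero (S.add q₁ q₂) → q₁ = S.zero ∧ q₂ = S.zero)
    (hzero_div : ∀ q₁ q₂ : Q, S.mul q₁ q₂ = S.zero → q₁ = S.zero ∨ q₂ = S.zero)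
    {γ : List Q} {Γ : List (VTy Q)} {M : Comp Q} {B : CTy Q} :
    CHasTy S γ Γ M B → CSem S γ Γ M B
  | .lam hM => .lam (hM.cSem hnontriv hzero_add hzero_div)
  | .app hM hV hle =>
    .app hzero_add hzero_div (hM.length_eq.trans hV.length_eq.symm)
      (hM.cSem hnontriv hzero_add hzero_div) (hV.vSem hnontriv hzero_add hzero_div) hle
  | .force hV => .force (hV.vSem hnontriv hzero_add hzero_div)
  | .ret hV hle =>
    .ret (fun _ ↦ S.eq_zero_of_zero_le hzero_add) hzero_div
      (hV.vSem hnontriv hzero_add hzero_div) hle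
  | .letin hM hN hle =>
    .letin hzero_add hzero_div (hM.length_eq.trans (Nat.succ.inj hN.length_eq).symm)
      (hM.cSem hnontriv hzero_add hzero_div) (hN.cSem hnontriv hzero_add hzero_div) hle
  | .split hV hN hle =>
    .split hzero_add hzero_div
      (hV.length_eq.trans (Nat.succ.inj (Nat.succ.inj hN.length_eq)).symm)
      (hV.vSem hnontriv hzero_add hzero_div) (hN.cSem hnontriv hzero_add hzero_div) hle
  | .cpair h₁ h₂ =>
    .cpair (h₁.cSem hnontriv hzero_add hzero_div) (h₂.cSem hnontriv hzero_add hzero_div)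
  | .fst hM => .fst (hM.cSem hnontriv hzero_add hzero_div)
  | .snd hM => .snd (hM.cSem hnontriv hzero_add hzero_div)

end

end

/-- Fundamental lemma of the resource logical relation: over a preordered
semiring that is nontrivial, whose preorder relates `0` below a sum only when
both summands are `0`, and with no nonzero zero divisors, syntactic
type-and-coeffect typing implies resource semantic typing, for values and for
computations. -/
theorem resource_fundamental_lemma {Q : Type} (S : CoSig Q)
    (hnontriv : S.one ≠ S.zero)
    (hzero_add : ∀ q₁ q₂ : Q, S.le S.zero (S.add q₁ q₂) → q₁ = S.zero ∧ q₂ = S.zero)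
    (hzero_div : ∀ q₁ q₂ : Q, S.mul q₁ q₂ = S.zero → q₁ = S.zero ∨ q₂ = S.zero) :
    (∀ {γ : List Q} {Γ : List (VTy Q)} {V : Val Q} {A : VTy Q},
      VHasTy S γ Γ V A → VSem S γ Γ V A) ∧
    (∀ {γ : List Q} {Γ : List (VTy Q)} {M : Comp Q} {B : CTy Q},
      CHasTy S γ Γ M B → CSem S γ Γ M B) := by
  exact ⟨fun hV ↦ hV.vSem hnontriv hzero_add hzero_div,
    fun hM ↦ hM.cSem hnontriv hzero_add hzero_div⟩

end CBPVCo
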